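/- arXiv:1406.3974 — 2 statements merged into one kernel-verified Lean document; each statement's English description precedes it below -/
import Mathlib

section
/- Let u be an infinite word over a finite alphabet which is not ultimately periodic and satisfies p_u(n) ≤ C·n for all n ≥ 1. Then for every n ≥ 1, every factor of u of length (C+1)·n contains a right special factor of u of length n as a factor; i.e., the set of right special factors of u of length n is a set of (C+1)-markers. -/
/-!
A factor of length `p_u(n) + n` has `p_u(n) + 1` windows of length `n`, so two of them, at positions
`a < a + p`, carry the same word. If no window of the factor were right special, each of those at
`a, …, a + p - 1` would determine the letter that follows it. The windows from `a` onwards would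
then repeat with period `p` for ever, and `u` would be ultimately periodic.
-/

/-- The factor of the infinite word `u` of length `n` starting at position `i`. -/
def wordSeg {α : Type*} (u : ℕ → α) (i n : ℕ) : List α :=
  (List.range n).map (fun t => u (i + t))

/-- The set of (finite) factors of the infinite word `u`. -/
def Factors {α : Type*} (u : ℕ → α) : Set (List α) :=
  {w | ∃ i, w = wordSeg u i w.length}

/-- Subword complexity: the number of distinct factors of `u` of length `n`. -/
noncomputable def complexity {α : Type*} (u : ℕ → α) (n : ℕ) : ℕ :=
  {w : List α | w.length = n ∧ w ∈ Factors u}.ncard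

/-- `p_L(n)`: the number of words of length `n` in the language `L`. -/
noncomputable def langComplexity {α : Type*} (L : Set (List α)) (n : ℕ) : ℕ :=
  {w ∈ L | w.length = n}.ncard

/-- `u` is ultimately periodic: `u = v w w w ⋯` for some finite `v` and nonempty `w`. -/
def UltimatelyPeriodic {α : Type*} (u : ℕ → α) : Prop :=
  ∃ p, 0 < p ∧ ∃ N, ∀ i, N ≤ i → u (i + p) = u i

/-- `v` is a right special factor of `u`: `va` and `vb` are factors of `u` for two
distinct letters `a ≠ b`. -/
def RightSpecial {α : Type*} (u : ℕ → α) (v : List α) : Prop :=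
  ∃ a b : α, a ≠ b ∧ (v ++ [a]) ∈ Factors u ∧ (v ++ [b]) ∈ Factors u

section WordSeg

variable {α : Type*} (u : ℕ → α)

theorem length_wordSeg (i n : ℕ) : (wordSeg u i n).length = n := by
  simp [wordSeg]

theorem wordSeg_mem_factors (i n : ℕ) : wordSeg u i n ∈ Factors u :=
  ⟨i, by rw [length_wordSeg]⟩

theorem wordSeg_succ_eq_append (i n : ℕ) :
    wordSeg u i (n + 1) = wordSeg u i n ++ [u (i + n)] := by
  simp [wordSeg, List.range_succ]

theorem wordSeg_succ_eq_cons (i n : ℕ) :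
    wordSeg u i (n + 1) = u i :: wordSeg u (i + 1) n := by
  simp [wordSeg, List.range_succ_eq_map, Function.comp_def, add_assoc, add_comm 1]

theorem wordSeg_add (i m n : ℕ) :
    wordSeg u i (m + n) = wordSeg u i m ++ wordSeg u (i + m) n := by
  simp [wordSeg, List.range_add, add_assoc]

theorem wordSeg_isInfix_wordSeg (i : ℕ) {k n N : ℕ} (h : k + n ≤ N) :
    wordSeg u (i + k) n <:+: wordSeg u i N := by
  obtain ⟨r, rfl⟩ := Nat.exists_eq_add_of_le h
  exact ⟨wordSeg u i k, wordSeg u (i + (k + n)) r, by rw [wordSeg_add, wordSeg_add]⟩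

end WordSeg

section Recurrence

variable {α : Type*} {u : ℕ → α} {a p n : ℕ}

theorem apply_add_eq_of_not_rightSpecial {i j : ℕ} (h : wordSeg u i n = wordSeg u j n)
    (hs : ¬ RightSpecial u (wordSeg u i n)) : u (i + n) = u (j + n) := by
  by_contra hne
  refine hs ⟨u (i + n), u (j + n), hne, ?_, ?_⟩
  · rw [← wordSeg_succ_eq_append]
    exact wordSeg_mem_factors u i (n + 1)
  · rw [h, ← wordSeg_succ_eq_append]
    exact wordSeg_mem_factors u j (n + 1)

theorem wordSeg_add_one_eq_of_not_rightSpecial {i j : ℕ} (h : wordSeg u i n = wordSeg u j n)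
    (hs : ¬ RightSpecial u (wordSeg u i n)) : wordSeg u (i + 1) n = wordSeg u (j + 1) n := by
  have hext : wordSeg u i (n + 1) = wordSeg u j (n + 1) := by
    rw [wordSeg_succ_eq_append, wordSeg_succ_eq_append, h, apply_add_eq_of_not_rightSpecial h hs]
  rw [wordSeg_succ_eq_cons, wordSeg_succ_eq_cons] at hext
  exact (List.cons.inj hext).2

theorem exists_lt_wordSeg_eq_of_not_rightSpecial (hp : 0 < p)
    (h : wordSeg u a n = wordSeg u (a + p) n)
    (hs : ∀ k < p, ¬ RightSpecial u (wordSeg u (a + k) n)) (m : ℕ) :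
    ∃ k < p, wordSeg u (a + m) n = wordSeg u (a + k) n := by
  induction m with
  | zero => exact ⟨0, hp, rfl⟩
  | succ m ih =>
    obtain ⟨k, hk, hmk⟩ := ih
    have hnext : wordSeg u (a + (m + 1)) n = wordSeg u (a + (k + 1)) n :=
      wordSeg_add_one_eq_of_not_rightSpecial hmk (hmk ▸ hs k hk)
    rcases Nat.lt_or_eq_of_le (Nat.succ_le_of_lt hk) with hlt | rfl
    · exact ⟨k + 1, hlt, hnext⟩
    · exact ⟨0, hp, hnext.trans h.symm⟩

theorem ultimatelyPeriodic_of_forall_not_rightSpecial (hp : 0 < p)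
    (h : wordSeg u a n = wordSeg u (a + p) n)
    (hs : ∀ m, ¬ RightSpecial u (wordSeg u (a + m) n)) : UltimatelyPeriodic u := by
  have hperiod (m : ℕ) : wordSeg u (a + m) n = wordSeg u (a + p + m) n := by
    induction m with
    | zero => exact h
    | succ m ih => exact wordSeg_add_one_eq_of_not_rightSpecial ih (hs m)
  refine ⟨p, hp, a + n, fun i hi => ?_⟩
  obtain ⟨m, rfl⟩ := Nat.exists_eq_add_of_le hi
  have hletter : u (a + m + n) = u (a + p + m + n) :=
    apply_add_eq_of_not_rightSpecial (hperiod m) (hs m)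
  convert hletter.symm using 2 <;> ring

theorem exists_rightSpecial_of_wordSeg_eq (hnp : ¬ UltimatelyPeriodic u) (hp : 0 < p)
    (h : wordSeg u a n = wordSeg u (a + p) n) :
    ∃ k < p, RightSpecial u (wordSeg u (a + k) n) := by
  by_contra! hs
  refine hnp (ultimatelyPeriodic_of_forall_not_rightSpecial hp h fun m => ?_)
  obtain ⟨k, hk, hmk⟩ := exists_lt_wordSeg_eq_of_not_rightSpecial hp h hs m
  exact hmk ▸ hs k hk

end Recurrence

theorem finite_setOf_length_eq_and_mem_factors {α : Type*} [Finite α] (u : ℕ → α) (n : ℕ) :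
    {w | w.length = n ∧ w ∈ Factors u}.Finite :=
  (List.finite_length_eq α n).subset fun _ hw => hw.1

theorem exists_wordSeg_eq_wordSeg_add {α : Type*} {u : ℕ → α} {n : ℕ}
    (hfin : {w | w.length = n ∧ w ∈ Factors u}.Finite) (i : ℕ) :
    ∃ k p, 0 < p ∧ k + p ≤ complexity u n ∧
      wordSeg u (i + k) n = wordSeg u (i + k + p) n := by
  have hcard : complexity u n < (Set.Iic (complexity u n)).ncard := by
    simp [Set.ncard_eq_toFinset_card']
  obtain ⟨x, hx, y, hy, hne, hxy⟩ := Set.exists_ne_map_eq_of_ncard_lt_of_maps_to hcard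
    (f := fun k => wordSeg u (i + k) n)
    (fun k _ => ⟨length_wordSeg u (i + k) n, wordSeg_mem_factors u (i + k) n⟩) hfin
  wlog hlt : x < y generalizing x y
  · exact this y hy x hx hne.symm hxy.symm (by omega)
  obtain ⟨p, rfl⟩ := Nat.exists_eq_add_of_lt hlt
  exact ⟨x, p + 1, p.succ_pos, hy, by simpa only [add_assoc] using hxy⟩

theorem stmt6_general {α : Type*} {u : ℕ → α} (hnp : ¬ UltimatelyPeriodic u) {n : ℕ}
    (hfin : {w | w.length = n ∧ w ∈ Factors u}.Finite) {w : List α} (hw : w ∈ Factors u)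
    (hlen : complexity u n + n ≤ w.length) :
    ∃ v : List α, v.length = n ∧ RightSpecial u v ∧ v <:+: w := by
  obtain ⟨i, hi⟩ := hw
  obtain ⟨k, p, hp, hkp, hrec⟩ := exists_wordSeg_eq_wordSeg_add hfin i
  obtain ⟨m, hm, hspecial⟩ := exists_rightSpecial_of_wordSeg_eq hnp hp hrec
  refine ⟨wordSeg u (i + k + m) n, length_wordSeg u _ n, hspecial, ?_⟩
  rw [hi, add_assoc]
  exact wordSeg_isInfix_wordSeg u i (by omega)

/-- for a non-ultimately-periodic word `u` with `p_u(n) ≤ C·n`, every factor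
of `u` of length `(C+1)·n` contains a right special factor of `u` of length `n`; i.e. the
right special factors of length `n` form a set of `(C+1)`-markers. -/
theorem stmt6 {α : Type*} [Fintype α] (u : ℕ → α) (C : ℕ)
    (hnp : ¬ UltimatelyPeriodic u)
    (hp : ∀ n, 1 ≤ n → complexity u n ≤ C * n) :
    ∀ n, 1 ≤ n → ∀ w ∈ Factors u, w.length = (C + 1) * n →
      ∃ v : List α, v.length = n ∧ RightSpecial u v ∧ v <:+: w := by
  intro n hn w hw hlen
  exact stmt6_general hnp (finite_setOf_length_eq_and_mem_factors u n) hw (by linarith [hp n hn])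
end

section
/- Let u be an infinite word over a finite alphabet which is not ultimately periodic, and let w be a factor of u of length n with minimal period p(w). Then w admits a final occurrence in u: there exists j ≥ 0 such that u[j+1..j+n] = w and u_{j+i} ≠ u_{j+i+p(w)} for some i with n − p(w) + 1 ≤ i ≤ n. -/
/-- The minimal period `p(w)` of a finite word `w`: the least `p > 0` such that
`w_i = w_{i+p}` whenever both indices are within `w` (here 0-based). -/
noncomputable def minPeriod {α : Type*} (w : List α) : ℕ :=
  sInf {p | 0 < p ∧ ∀ i, i + p < w.length → w[i]? = w[i + p]?}

section

variable {α : Type*} {u : ℕ → α} {w : List α} {j n p : ℕ}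

lemma isLeast_minPeriod (w : List α) : IsLeast {p | 0 < p ∧ w.HasPeriod p} (minPeriod w) := by
  have hset : minPeriod w = sInf {p | 0 < p ∧ w.HasPeriod p} := by
    simp only [minPeriod, List.hasPeriod_iff_getElem?, Nat.lt_sub_iff_add_lt]
  have hne : {p | 0 < p ∧ w.HasPeriod p}.Nonempty :=
    ⟨w.length + 1, w.length.succ_pos, w.hasPeriod_of_length_le _ w.length.le_succ⟩
  exact hset ▸ ⟨Nat.sInf_mem hne, fun _ => Nat.sInf_le⟩

lemma minPeriod_pos (w : List α) : 0 < minPeriod w :=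
  (isLeast_minPeriod w).1.1

lemma hasPeriod_minPeriod (w : List α) : w.HasPeriod (minPeriod w) :=
  (isLeast_minPeriod w).1.2

lemma minPeriod_le_length (hne : w ≠ []) : minPeriod w ≤ w.length :=
  (isLeast_minPeriod w).2 ⟨List.length_pos_iff.mpr hne, w.hasPeriod_of_length_le _ le_rfl⟩

lemma wordSeg_eq_wordSeg_iff {v : ℕ → α} {i : ℕ} :
    wordSeg u i n = wordSeg v j n ↔ ∀ t < n, u (i + t) = v (j + t) := by
  simp [wordSeg]

lemma hasPeriod_wordSeg_iff :
    (wordSeg u j n).HasPeriod p ↔ ∀ i, i + p < n → u (j + i) = u (j + i + p) := by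
  simp only [List.hasPeriod_iff_getElem?, Nat.lt_sub_iff_add_lt, wordSeg, List.length_map,
    List.length_range]
  refine forall₂_congr fun i hi => ?_
  have hin : i < n := (Nat.le_add_right i p).trans_lt hi
  simp [hi, hin, add_assoc]

lemma wordSeg_add_period (hper : (wordSeg u j n).HasPeriod p)
    (hlast : ∀ i, n - p ≤ i → i < n → u (j + i) = u (j + i + p)) :
    wordSeg u (j + p) n = wordSeg u j n := by
  refine wordSeg_eq_wordSeg_iff.mpr fun t ht => ?_
  rw [add_right_comm]
  rcases lt_or_ge (t + p) n with hearly | hlate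
  · exact (hasPeriod_wordSeg_iff.mp hper t hearly).symm
  · exact (hlast t (Nat.sub_le_of_le_add hlate) ht).symm

lemma ultimatelyPeriodic_of_wordSeg_add_mul (hp : 0 < p) (hpn : p ≤ n)
    (hocc : ∀ k, wordSeg u (j + k * p) n = wordSeg u j n) : UltimatelyPeriodic u := by
  have hval : ∀ k, ∀ t < p, u (j + k * p + t) = u (j + t) := fun k t ht =>
    wordSeg_eq_wordSeg_iff.mp (hocc k) t (ht.trans_le hpn)
  refine ⟨p, hp, j, fun i hi => ?_⟩
  obtain ⟨m, rfl⟩ := Nat.exists_eq_add_of_le hi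
  have hmod : m % p < p := Nat.mod_lt m hp
  have hdiv : m / p * p + m % p = m := Nat.div_add_mod' m p
  calc u (j + m + p) = u (j + (m / p + 1) * p + m % p) := by congr 1; rw [add_one_mul]; omega
    _ = u (j + m % p) := hval _ _ hmod
    _ = u (j + m / p * p + m % p) := (hval _ _ hmod).symm
    _ = u (j + m) := by rw [add_assoc, hdiv]

theorem stmt8_general (hnp : ¬ UltimatelyPeriodic u) (hw : w = wordSeg u j w.length)
    (hp : 0 < p) (hpw : p ≤ w.length) (hper : w.HasPeriod p) :
    ∃ k : ℕ, wordSeg u (j + k * p) w.length = w ∧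
      ∃ i : ℕ, w.length - p ≤ i ∧ i < w.length ∧ u (j + k * p + i) ≠ u (j + k * p + i + p) := by
  by_contra! hfinal
  have hocc : ∀ k, wordSeg u (j + k * p) w.length = w := by
    intro k
    induction k with
    | zero => simpa using hw.symm
    | succ k ih =>
      rw [add_one_mul, ← add_assoc, wordSeg_add_period (ih.symm ▸ hper) (hfinal k ih), ih]
  exact hnp (ultimatelyPeriodic_of_wordSeg_add_mul hp hpw fun k => (hocc k).trans hw)

end

/-- every (nonempty) factor `w` of a non-ultimately-periodic word `u` admits
a final occurrence: an occurrence `w = u[j..j+n)` together with a position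
`i ∈ [n − p(w), n)` with `u_{j+i} ≠ u_{j+i+p(w)}`. -/
theorem stmt8 {α : Type*} (u : ℕ → α) (hnp : ¬ UltimatelyPeriodic u)
    (w : List α) (hw : w ∈ Factors u) (hne : w ≠ []) :
    ∃ j : ℕ, wordSeg u j w.length = w ∧
      ∃ i : ℕ, w.length - minPeriod w ≤ i ∧ i < w.length ∧
        u (j + i) ≠ u (j + i + minPeriod w) := by
  obtain ⟨j, hj⟩ := hw
  obtain ⟨k, hk⟩ := stmt8_general hnp hj (minPeriod_pos w) (minPeriod_le_length hne)
    (hasPeriod_minPeriod w)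
  exact ⟨j + k * minPeriod w, hk⟩
end
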